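/- Let b_1,…,b_N be i.i.d. N(0, (1/N) I_{n−1}) Gaussian vectors and v ∈ ℝ^N a fixed vector. There is a universal constant C > 0 such that for any δ ∈ (0,1), with probability at least 1−δ, ‖Σ_{i=1}^N (‖b_i‖² − (n−1)/N) v_i b_i‖ ≤ C( ‖v‖·n·√(log(N/δ))/N^{3/2} + ‖v‖_∞·n·log^{5/2}(N/δ)/N^{3/2} ). -/

import Mathlib

open MeasureTheory ProbabilityTheory Matrix

/-- Euclidean norm of a vector in `ℝ^k`. -/
noncomputable def eucNorm {k : ℕ} (v : Fin k → ℝ) : ℝ := Real.sqrt (∑ i, (v i) ^ 2)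

/-- Supremum (ℓ_∞) norm of a vector in `ℝ^k`. -/
noncomputable def supNorm {k : ℕ} (v : Fin k → ℝ) : ℝ := ⨆ i, |v i|

/-- The Gaussian measure `N(0, σ2 · I_k)` on `ℝ^k`. -/
noncomputable def gaussVec (k : ℕ) (σ2 : NNReal) : Measure (Fin k → ℝ) :=
  Measure.pi fun _ => gaussianReal 0 σ2

instance (k : ℕ) (σ2 : NNReal) : IsProbabilityMeasure (gaussVec k σ2) := by
  unfold gaussVec; infer_instance

/-- The law of `N` i.i.d. samples from `N(0, σ2 · I_k)`. -/
noncomputable def iidGaussVec (N k : ℕ) (σ2 : NNReal) : Measure (Fin N → Fin k → ℝ) :=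
  Measure.pi fun _ => gaussVec k σ2

/-!
The parallelogram law gives `cosh ‖x + y‖ + cosh ‖x - y‖ ≤ 2 cosh ‖x‖ cosh ‖y‖` in a Hilbert space,
an observation of Pinelis, so `𝔼 cosh ‖·‖` is submultiplicative along sums of independent symmetric
vectors. It replaces the moment generating function in Chernoff's argument and yields a
dimension-free Bernstein inequality. After scaling to unit variance, the `i`-th summand is an odd
function of a symmetric Gaussian vector, and it stays odd, hence symmetric, after truncation to
`|‖b i‖ ^ 2 - k| ≤ 16 L √k` with `L = log (N / δ)`. Bernstein's inequality handles the truncated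
sum; by the exponential moments of the chi-square law, some `b i` is truncated with probability at
most `3 N exp (-4 L)`.
-/

lemma cosh_add_cosh_le_of_sq_add_sq_eq {a c p q : ℝ} (hpa : p ^ 2 ≤ a ^ 2) (hqa : q ^ 2 ≤ a ^ 2)
    (h : p ^ 2 + q ^ 2 = a ^ 2 + c ^ 2) :
    Real.cosh p + Real.cosh q ≤ Real.cosh a + Real.cosh c := by
  -- Termwise comparison of the power series: `x ↦ x ^ m` is convex on `[0, ∞)`.
  refine hasSum_le (fun m => ?_) ((Real.hasSum_cosh p).add (Real.hasSum_cosh q))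
    ((Real.hasSum_cosh a).add (Real.hasSum_cosh c))
  rw [← add_div, ← add_div]
  simp only [pow_mul]
  gcongr ?_ / _
  have hp := geom_sum₂_mul (p ^ 2) (c ^ 2) m
  have ha := geom_sum₂_mul (a ^ 2) (q ^ 2) m
  have hcq : c ^ 2 ≤ q ^ 2 := by linarith
  have hsum : ∑ i ∈ Finset.range m, (p ^ 2) ^ i * (c ^ 2) ^ (m - 1 - i) ≤
      ∑ i ∈ Finset.range m, (a ^ 2) ^ i * (q ^ 2) ^ (m - 1 - i) := by gcongr
  have hmul := mul_le_mul_of_nonneg_right hsum (sub_nonneg.2 hqa)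
  rw [show p ^ 2 - c ^ 2 = a ^ 2 - q ^ 2 by linarith] at hp
  linarith

lemma cosh_le_one_add_sq {x : ℝ} (hx : |x| ≤ 1) : Real.cosh x ≤ 1 + x ^ 2 := by
  have hpos := (abs_le.1 (Real.abs_exp_sub_one_sub_id_le hx)).2
  have hneg := (abs_le.1 (Real.abs_exp_sub_one_sub_id_le (x := -x) (by rwa [abs_neg]))).2
  rw [Real.cosh_eq]
  linarith

lemma identDistrib_prodMk_neg {Ω E G : Type*} [MeasurableSpace Ω] {P : Measure Ω}
    [IsFiniteMeasure P] [MeasurableSpace E] [MeasurableSpace G] [Neg G] [MeasurableNeg G]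
    {X : Ω → E} {Y : Ω → G} (hX : Measurable X) (hY : Measurable Y) (hindep : X ⟂ᵢ[P] Y)
    (hsymm : IdentDistrib Y (fun ω => -Y ω) P P) :
    IdentDistrib (fun ω => (X ω, Y ω)) (fun ω => (X ω, -Y ω)) P P where
  aemeasurable_fst := by fun_prop
  aemeasurable_snd := by fun_prop
  map_eq := by
    have hneg : X ⟂ᵢ[P] fun ω => -Y ω := hindep.comp measurable_id measurable_neg
    rw [hindep.map_prod_eq_prod_map_map (by fun_prop) (by fun_prop),
      hneg.map_prod_eq_prod_map_map (by fun_prop) (by fun_prop), hsymm.map_eq]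

section HilbertSpace

variable {Ω H ι : Type*} [MeasurableSpace Ω] {P : Measure Ω} [NormedAddCommGroup H]

lemma cosh_norm_add_add_cosh_norm_sub_le [InnerProductSpace ℝ H] (x y : H) :
    Real.cosh ‖x + y‖ + Real.cosh ‖x - y‖ ≤ 2 * (Real.cosh ‖x‖ * Real.cosh ‖y‖) := by
  have h := cosh_add_cosh_le_of_sq_add_sq_eq (p := ‖x + y‖) (q := ‖x - y‖) (a := ‖x‖ + ‖y‖)
    (c := ‖x‖ - ‖y‖) (by gcongr; exact norm_add_le x y) (by gcongr; exact norm_sub_le x y)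
    (by linarith [parallelogram_law_with_norm ℝ x y])
  rw [Real.cosh_add, Real.cosh_sub] at h
  linarith

lemma lintegral_cosh_norm_le_exp [IsProbabilityMeasure P] {X : Ω → H}
    (hbound : ∀ᵐ ω ∂P, ‖X ω‖ ≤ 1) {s : ℝ}
    (hvar : ∫⁻ ω, ENNReal.ofReal (‖X ω‖ ^ 2) ∂P ≤ ENNReal.ofReal (s ^ 2)) :
    ∫⁻ ω, ENNReal.ofReal (Real.cosh ‖X ω‖) ∂P ≤ ENNReal.ofReal (Real.exp (s ^ 2)) :=
  calc ∫⁻ ω, ENNReal.ofReal (Real.cosh ‖X ω‖) ∂P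
    _ ≤ ∫⁻ ω, (1 + ENNReal.ofReal (‖X ω‖ ^ 2)) ∂P := by
        refine lintegral_mono_ae (hbound.mono fun ω hω => ?_)
        rw [← ENNReal.ofReal_one, ← ENNReal.ofReal_add zero_le_one (by positivity)]
        exact ENNReal.ofReal_le_ofReal (cosh_le_one_add_sq (by rwa [abs_norm]))
    _ = 1 + ∫⁻ ω, ENNReal.ofReal (‖X ω‖ ^ 2) ∂P := by
        rw [lintegral_add_left measurable_const, lintegral_one, measure_univ]
    _ ≤ ENNReal.ofReal (1 + s ^ 2) := by
        rw [ENNReal.ofReal_add zero_le_one (sq_nonneg s), ENNReal.ofReal_one]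
        gcongr
    _ ≤ ENNReal.ofReal (Real.exp (s ^ 2)) := by
        gcongr
        linarith [Real.add_one_le_exp (s ^ 2)]

variable [MeasurableSpace H] [BorelSpace H] [SecondCountableTopology H] [InnerProductSpace ℝ H]
  {X : ι → Ω → H} {σ : ι → ℝ} {R : ℝ}

lemma lintegral_cosh_norm_add_le [IsFiniteMeasure P] {X Y : Ω → H} (hX : Measurable X)
    (hY : Measurable Y) (hindep : X ⟂ᵢ[P] Y) (hsymm : IdentDistrib Y (fun ω => -Y ω) P P) :
    ∫⁻ ω, ENNReal.ofReal (Real.cosh ‖X ω + Y ω‖) ∂P ≤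
      (∫⁻ ω, ENNReal.ofReal (Real.cosh ‖X ω‖) ∂P) *
        ∫⁻ ω, ENNReal.ofReal (Real.cosh ‖Y ω‖) ∂P := by
  have hflip : ∫⁻ ω, ENNReal.ofReal (Real.cosh ‖X ω + Y ω‖) ∂P =
      ∫⁻ ω, ENNReal.ofReal (Real.cosh ‖X ω - Y ω‖) ∂P := by
    simpa only [sub_eq_add_neg, Function.comp_def] using
      ((identDistrib_prodMk_neg hX hY hindep hsymm).comp
        (u := fun z : H × H => ENNReal.ofReal (Real.cosh ‖z.1 + z.2‖))
        (by fun_prop)).lintegral_eq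
  rw [← ENNReal.mul_le_mul_iff_right (a := 2) (by norm_num) (by norm_num)]
  calc 2 * ∫⁻ ω, ENNReal.ofReal (Real.cosh ‖X ω + Y ω‖) ∂P
    _ = ∫⁻ ω, (ENNReal.ofReal (Real.cosh ‖X ω + Y ω‖) +
          ENNReal.ofReal (Real.cosh ‖X ω - Y ω‖)) ∂P := by
        rw [lintegral_add_left (by fun_prop), ← hflip, two_mul]
    _ ≤ ∫⁻ ω, 2 * (ENNReal.ofReal (Real.cosh ‖X ω‖) * ENNReal.ofReal (Real.cosh ‖Y ω‖)) ∂P := by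
        refine lintegral_mono fun ω => ?_
        rw [← ENNReal.ofReal_add (Real.cosh_pos _).le (Real.cosh_pos _).le,
          ← ENNReal.ofReal_mul (Real.cosh_pos _).le, ← ENNReal.ofReal_ofNat,
          ← ENNReal.ofReal_mul zero_le_two]
        exact ENNReal.ofReal_le_ofReal (cosh_norm_add_add_cosh_norm_sub_le _ _)
    _ = 2 * ((∫⁻ ω, ENNReal.ofReal (Real.cosh ‖X ω‖) ∂P) *
          ∫⁻ ω, ENNReal.ofReal (Real.cosh ‖Y ω‖) ∂P) := by
        have hcoshIndep := hindep.comp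
          (φ := fun x => ENNReal.ofReal (Real.cosh ‖x‖))
          (ψ := fun y => ENNReal.ofReal (Real.cosh ‖y‖)) (by fun_prop) (by fun_prop)
        rw [lintegral_const_mul _ (by fun_prop)]
        exact congrArg (2 * ·) (lintegral_mul_eq_lintegral_mul_lintegral_of_indepFun''
          (by fun_prop) (by fun_prop) hcoshIndep)

lemma lintegral_cosh_norm_sum_le (hX : ∀ i, Measurable (X i)) (hindep : iIndepFun X P)
    (hsymm : ∀ i, IdentDistrib (X i) (fun ω => -X i ω) P P) (s : Finset ι) :
    ∫⁻ ω, ENNReal.ofReal (Real.cosh ‖∑ i ∈ s, X i ω‖) ∂P ≤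
      ∏ i ∈ s, ∫⁻ ω, ENNReal.ofReal (Real.cosh ‖X i ω‖) ∂P := by
  have := hindep.isProbabilityMeasure
  induction s using Finset.cons_induction with
  | empty => simp
  | cons j s hj ih =>
    have hsum : (fun ω => ∑ i ∈ s, X i ω) ⟂ᵢ[P] X j := by
      simpa only [Finset.sum_fn] using hindep.indepFun_finsetSum_of_notMem hX hj
    simp only [Finset.sum_cons, Finset.prod_cons, add_comm (X j _), mul_comm (lintegral P _)]
    exact (lintegral_cosh_norm_add_le (by fun_prop) (hX j) hsum (hsymm j)).trans (by gcongr)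

variable [Fintype ι]

lemma lintegral_cosh_norm_smul_sum_le (hX : ∀ i, Measurable (X i)) (hindep : iIndepFun X P)
    (hsymm : ∀ i, IdentDistrib (X i) (fun ω => -X i ω) P P)
    (hbound : ∀ i, ∀ᵐ ω ∂P, ‖X i ω‖ ≤ R)
    (hvar : ∀ i, ∫⁻ ω, ENNReal.ofReal (‖X i ω‖ ^ 2) ∂P ≤ ENNReal.ofReal (σ i ^ 2))
    {c : ℝ} (hc : 0 ≤ c) (hcR : c * R ≤ 1) :
    ∫⁻ ω, ENNReal.ofReal (Real.cosh ‖c • ∑ i, X i ω‖) ∂P ≤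
      ENNReal.ofReal (Real.exp (c ^ 2 * ∑ i, σ i ^ 2)) := by
  have := hindep.isProbabilityMeasure
  have hsum := lintegral_cosh_norm_sum_le (X := fun i ω => c • X i ω)
    (fun i => (hX i).const_smul c) (hindep.comp (fun _ x => c • x) fun _ => by fun_prop)
    (fun i => by
      simpa only [Function.comp_def, smul_neg] using (hsymm i).comp (measurable_const_smul c))
    Finset.univ
  have hfactor (i : ι) : ∫⁻ ω, ENNReal.ofReal (Real.cosh ‖c • X i ω‖) ∂P ≤
      ENNReal.ofReal (Real.exp ((c * σ i) ^ 2)) := by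
    refine lintegral_cosh_norm_le_exp (X := fun ω => c • X i ω) ?_ ?_
    · filter_upwards [hbound i] with ω hω
      rw [norm_smul, Real.norm_of_nonneg hc]
      exact (mul_le_mul_of_nonneg_left hω hc).trans hcR
    · simp only [norm_smul, mul_pow, Real.norm_eq_abs, sq_abs, ENNReal.ofReal_mul (sq_nonneg c)]
      rw [lintegral_const_mul' _ _ ENNReal.ofReal_ne_top]
      gcongr
      exact hvar i
  calc ∫⁻ ω, ENNReal.ofReal (Real.cosh ‖c • ∑ i, X i ω‖) ∂P
    _ ≤ ∏ i, ENNReal.ofReal (Real.exp ((c * σ i) ^ 2)) := by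
        simp only [Finset.smul_sum]
        exact hsum.trans (Finset.prod_le_prod' fun i _ => hfactor i)
    _ = ENNReal.ofReal (Real.exp (c ^ 2 * ∑ i, σ i ^ 2)) := by
        rw [← ENNReal.ofReal_prod_of_nonneg fun i _ => (Real.exp_pos _).le, ← Real.exp_sum,
          Finset.mul_sum]
        simp only [mul_pow]

lemma measure_le_norm_sum_le (hX : ∀ i, Measurable (X i)) (hindep : iIndepFun X P)
    (hsymm : ∀ i, IdentDistrib (X i) (fun ω => -X i ω) P P)
    (hbound : ∀ i, ∀ᵐ ω ∂P, ‖X i ω‖ ≤ R)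
    (hvar : ∀ i, ∫⁻ ω, ENNReal.ofReal (‖X i ω‖ ^ 2) ∂P ≤ ENNReal.ofReal (σ i ^ 2))
    {c : ℝ} (hc : 0 ≤ c) (hcR : c * R ≤ 1) (t : ℝ) :
    P {ω | t ≤ ‖∑ i, X i ω‖} ≤ ENNReal.ofReal (2 * Real.exp (c ^ 2 * ∑ i, σ i ^ 2 - c * t)) := by
  have hsub : {ω | t ≤ ‖∑ i, X i ω‖} ⊆ {ω | ENNReal.ofReal (Real.exp (c * t) / 2) ≤
      ENNReal.ofReal (Real.cosh ‖c • ∑ i, X i ω‖)} := by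
    intro ω hω
    refine ENNReal.ofReal_le_ofReal ?_
    rw [norm_smul, Real.norm_of_nonneg hc, Real.cosh_eq]
    have hexp : Real.exp (c * t) ≤ Real.exp (c * ‖∑ i, X i ω‖) := by
      gcongr
      exact hω
    linarith [Real.exp_pos (-(c * ‖∑ i, X i ω‖))]
  have hmeas : Measurable fun ω => ENNReal.ofReal (Real.cosh ‖c • ∑ i, X i ω‖) := by
    fun_prop
  calc P {ω | t ≤ ‖∑ i, X i ω‖}
    _ ≤ (∫⁻ ω, ENNReal.ofReal (Real.cosh ‖c • ∑ i, X i ω‖) ∂P) /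
          ENNReal.ofReal (Real.exp (c * t) / 2) :=
        (measure_mono hsub).trans (meas_ge_le_lintegral_div hmeas.aemeasurable
          (ENNReal.ofReal_pos.2 (by positivity)).ne' ENNReal.ofReal_ne_top)
    _ ≤ ENNReal.ofReal (Real.exp (c ^ 2 * ∑ i, σ i ^ 2)) /
          ENNReal.ofReal (Real.exp (c * t) / 2) := by
        gcongr
        exact lintegral_cosh_norm_smul_sum_le hX hindep hsymm hbound hvar hc hcR
    _ = ENNReal.ofReal (2 * Real.exp (c ^ 2 * ∑ i, σ i ^ 2 - c * t)) := by
        rw [← ENNReal.ofReal_div_of_pos (by positivity), Real.exp_sub]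
        congr 1
        field_simp

theorem measure_norm_sum_gt_le_bernstein (hX : ∀ i, Measurable (X i)) (hindep : iIndepFun X P)
    (hsymm : ∀ i, IdentDistrib (X i) (fun ω => -X i ω) P P) (hR : 0 ≤ R)
    (hbound : ∀ i, ∀ᵐ ω ∂P, ‖X i ω‖ ≤ R)
    (hvar : ∀ i, ∫⁻ ω, ENNReal.ofReal (‖X i ω‖ ^ 2) ∂P ≤ ENNReal.ofReal (σ i ^ 2))
    {L : ℝ} (hL : 0 < L) :
    P {ω | 3 * (√(∑ i, σ i ^ 2) * √L + R * L) < ‖∑ i, X i ω‖} ≤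
      ENNReal.ofReal (2 * Real.exp (-(2 * L))) := by
  set S := √(∑ i, σ i ^ 2)
  have hS : S ^ 2 = ∑ i, σ i ^ 2 := Real.sq_sqrt (by positivity)
  set A := S * √L + R * L with hA_def
  rcases (by positivity : 0 ≤ A).eq_or_lt' with hA | hA
  · have hR0 : R = 0 := by
      have : 0 ≤ S * √L := by positivity
      nlinarith
    have hnull : P {ω | 3 * A < ‖∑ i, X i ω‖} = 0 := by
      refine measure_eq_zero_iff_ae_notMem.2 ?_
      filter_upwards [ae_all_iff.2 hbound] with ω hω
      simp_all
    simp [hnull]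
  · set c := L / A
    have hcA : c * A = L := div_mul_cancel₀ _ hA.ne'
    have hsplit : c * S * √L + c * R * L = L := by linear_combination hcA - c * hA_def
    have hcR : c * R ≤ 1 := by
      have : 0 ≤ c * S * √L := by positivity
      exact le_of_mul_le_mul_right (by linarith [hsplit]) hL
    have hcS : c * S ≤ √L := by
      have : 0 ≤ c * R * L := by positivity
      refine le_of_mul_le_mul_right ?_ (Real.sqrt_pos.2 hL)
      rw [Real.mul_self_sqrt hL.le]
      linarith
    have hexponent : c ^ 2 * ∑ i, σ i ^ 2 - c * (3 * A) ≤ -(2 * L) := by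
      have hsq : (c * S) ^ 2 ≤ L := (Real.le_sqrt (by positivity) hL.le).1 hcS
      rw [← hS, ← mul_pow]
      linarith
    calc P {ω | 3 * A < ‖∑ i, X i ω‖}
      _ ≤ P {ω | 3 * A ≤ ‖∑ i, X i ω‖} := by gcongr; exact le_of_lt
      _ ≤ ENNReal.ofReal (2 * Real.exp (c ^ 2 * ∑ i, σ i ^ 2 - c * (3 * A))) :=
          measure_le_norm_sum_le hX hindep hsymm hbound hvar (by positivity) hcR _
      _ ≤ ENNReal.ofReal (2 * Real.exp (-(2 * L))) := by gcongr

end HilbertSpace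

lemma identDistrib_neg_of_odd {Ω E G : Type*} [MeasurableSpace Ω] {P : Measure Ω}
    [MeasurableSpace E] [InvolutiveNeg E] [MeasurableNeg E] {μ : Measure E} [μ.IsNegInvariant]
    [MeasurableSpace G] [Neg G] {Z : Ω → E} (hZ : HasLaw Z μ P) {f : E → G} (hf : Measurable f)
    (hodd : ∀ x, f (-x) = -f x) :
    IdentDistrib (fun ω => f (Z ω)) (fun ω => -f (Z ω)) P P := by
  have hneg : HasLaw (fun ω => -Z ω) μ P := (Measure.measurePreserving_neg μ).hasLaw.fun_comp hZ
  simpa only [Function.comp_def, hodd] using (hZ.identDistrib hneg).comp hf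

section Gaussian

lemma lintegral_exp_mul_sq_gaussianReal {w : NNReal} {t : ℝ} (ht : 2 * w * t < 1) :
    ∫⁻ x, ENNReal.ofReal (Real.exp (t * x ^ 2)) ∂(gaussianReal 0 w) =
      ENNReal.ofReal (√(1 - 2 * w * t))⁻¹ := by
  rcases eq_or_ne w 0 with rfl | hw
  · simp [gaussianReal_zero_var]
  have hb : 0 < (1 - 2 * w * t) / (2 * w) := div_pos (by linarith) (by positivity)
  have hdensity (x : ℝ) : gaussianPDFReal 0 w x * Real.exp (t * x ^ 2) =
      (√(2 * Real.pi * w))⁻¹ * Real.exp (-((1 - 2 * w * t) / (2 * w)) * x ^ 2) := by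
    rw [gaussianPDFReal, mul_assoc, ← Real.exp_add]
    congr 2
    field_simp
    ring
  have hvariance : Real.pi / ((1 - 2 * w * t) / (2 * w)) =
      (2 * Real.pi * w) * (1 - 2 * w * t)⁻¹ := by
    field_simp
  rw [gaussianReal_of_var_ne_zero _ hw,
    lintegral_withDensity_eq_lintegral_mul _ (measurable_gaussianPDF 0 w) (by fun_prop)]
  simp only [Pi.mul_apply, gaussianPDF, ← ENNReal.ofReal_mul (gaussianPDFReal_nonneg 0 w _),
    hdensity]
  rw [← ofReal_integral_eq_lintegral_ofReal ((integrable_exp_neg_mul_sq hb).const_mul _)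
    (Filter.Eventually.of_forall fun x => by positivity), integral_const_mul, integral_gaussian,
    hvariance, Real.sqrt_mul (by positivity : (0 : ℝ) ≤ 2 * Real.pi * w), Real.sqrt_inv,
    inv_mul_cancel_left₀ (by positivity)]

lemma exp_neg_mul_inv_sqrt_le {t : ℝ} (ht : |t| ≤ 1 / 4) :
    Real.exp (-t) * (√(1 - 2 * t))⁻¹ ≤ Real.exp (4 * t ^ 2) := by
  have h2t : |2 * t| ≤ 1 / 2 := by
    rw [abs_mul, abs_two]
    linarith
  have hpos : 0 < 1 - 2 * t := by linarith [le_abs_self (2 * t)]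
  have hlog : -Real.log (1 - 2 * t) ≤ 2 * t + 8 * t ^ 2 := by
    have htaylor := Real.abs_log_sub_add_sum_range_le (x := 2 * t) (by linarith) 1
    have hremainder : |2 * t| ^ 2 / (1 - |2 * t|) ≤ 8 * t ^ 2 := by
      rw [div_le_iff₀ (by linarith), sq_abs]
      nlinarith [sq_nonneg t]
    simp only [Finset.sum_range_one, zero_add, pow_one, Nat.cast_zero, div_one, one_add_one_eq_two]
      at htaylor
    linarith [(abs_le.1 htaylor).1]
  have hsqrt : √(1 - 2 * t) = Real.exp (Real.log (1 - 2 * t) / 2) := by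
    rw [Real.exp_half, Real.exp_log hpos]
  rw [hsqrt, ← Real.exp_neg, ← Real.exp_add]
  gcongr
  linarith

lemma lintegral_exp_mul_sq_sub_one_gaussianReal_le {t : ℝ} (ht : |t| ≤ 1 / 4) :
    ∫⁻ x, ENNReal.ofReal (Real.exp (t * (x ^ 2 - 1))) ∂(gaussianReal 0 1) ≤
      ENNReal.ofReal (Real.exp (4 * t ^ 2)) := by
  have hsplit (x : ℝ) : ENNReal.ofReal (Real.exp (t * (x ^ 2 - 1))) =
      ENNReal.ofReal (Real.exp (-t)) * ENNReal.ofReal (Real.exp (t * x ^ 2)) := by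
    rw [← ENNReal.ofReal_mul (Real.exp_pos _).le, ← Real.exp_add]
    ring_nf
  simp only [hsplit]
  rw [lintegral_const_mul _ (by fun_prop),
    lintegral_exp_mul_sq_gaussianReal (by norm_num; linarith [le_abs_self t]),
    ← ENNReal.ofReal_mul (Real.exp_pos _).le]
  exact ENNReal.ofReal_le_ofReal (by simpa using exp_neg_mul_inv_sqrt_le ht)

instance isNegInvariant_gaussianReal_zero (w : NNReal) : (gaussianReal 0 w).IsNegInvariant :=
  ⟨by simpa only [neg_zero, Measure.neg] using gaussianReal_map_neg (μ := 0) (v := w)⟩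

instance isNegInvariant_gaussVec (k : ℕ) (w : NNReal) : (gaussVec k w).IsNegInvariant := by
  unfold gaussVec
  infer_instance

instance isProbabilityMeasure_iidGaussVec (N k : ℕ) (w : NNReal) :
    IsProbabilityMeasure (iidGaussVec N k w) := by
  unfold iidGaussVec
  infer_instance

lemma map_const_mul_gaussianReal_one (w : NNReal) :
    (gaussianReal 0 1).map (√(w : ℝ) * ·) = gaussianReal 0 w := by
  rw [gaussianReal_map_const_mul, mul_zero, mul_one]
  congr 1
  ext
  exact Real.sq_sqrt w.2

lemma map_smul_gaussVec_one (k : ℕ) (w : NNReal) :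
    (gaussVec k 1).map (√(w : ℝ) • ·) = gaussVec k w := by
  rw [gaussVec, gaussVec, ← map_const_mul_gaussianReal_one w]
  exact Measure.pi_map_pi (f := fun _ => (√(w : ℝ) * ·)) fun _ => by fun_prop

lemma map_smul_iidGaussVec_one (N k : ℕ) (w : NNReal) :
    (iidGaussVec N k 1).map (√(w : ℝ) • ·) = iidGaussVec N k w := by
  rw [iidGaussVec, iidGaussVec, ← map_smul_gaussVec_one k w]
  exact Measure.pi_map_pi (f := fun _ => (√(w : ℝ) • ·)) fun _ => by fun_prop

variable {k : ℕ}

/-- The deviation of `‖b‖²` from its mean `k` under the standard Gaussian law on `ℝ^k`, in units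
of `√k`; it is `0` for `k = 0`. -/
noncomputable def normSqDev (b : Fin k → ℝ) : ℝ := (∑ l, b l ^ 2 - k) / √k

@[fun_prop]
lemma measurable_normSqDev : Measurable (normSqDev : (Fin k → ℝ) → ℝ) := by
  unfold normSqDev
  fun_prop

lemma sum_sq_eq_add_normSqDev (b : Fin k → ℝ) : ∑ l, b l ^ 2 = k + √k * normSqDev b := by
  rcases k.eq_zero_or_pos with rfl | hk
  · simp
  · rw [normSqDev, mul_div_cancel₀ _ (by positivity), add_sub_cancel]

lemma lintegral_exp_mul_normSqDev_le {s : ℝ} (hs : |s| ≤ 1 / 4) :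
    ∫⁻ b : Fin k → ℝ, ENNReal.ofReal (Real.exp (s * normSqDev b)) ∂(gaussVec k 1) ≤
      ENNReal.ofReal (Real.exp (4 * s ^ 2)) := by
  rcases k.eq_zero_or_pos with rfl | hk
  · simp [normSqDev, sq_nonneg]
  have hk1 : 1 ≤ √(k : ℝ) := Real.one_le_sqrt.2 (by exact_mod_cast hk)
  have hsk : |s / √k| ≤ 1 / 4 := by
    rw [abs_div, abs_of_pos (by positivity : 0 < √(k : ℝ))]
    exact (div_le_self (abs_nonneg s) hk1).trans hs
  have hprod (b : Fin k → ℝ) : ENNReal.ofReal (Real.exp (s * normSqDev b)) =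
      ∏ l, ENNReal.ofReal (Real.exp (s / √k * (b l ^ 2 - 1))) := by
    rw [← ENNReal.ofReal_prod_of_nonneg fun i _ => (Real.exp_pos _).le, ← Real.exp_sum,
      ← Finset.mul_sum, Finset.sum_sub_distrib, normSqDev]
    simp only [Finset.sum_const, Finset.card_univ, Fintype.card_fin, nsmul_eq_mul, mul_one]
    ring_nf
  have hindep : iIndepFun (fun l (b : Fin k → ℝ) =>
      ENNReal.ofReal (Real.exp (s / √k * (b l ^ 2 - 1)))) (gaussVec k 1) :=
    iIndepFun_pi (X := fun _ x => ENNReal.ofReal (Real.exp (s / √k * (x ^ 2 - 1))))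
      fun _ => by fun_prop
  have hfactor (l : Fin k) : ∫⁻ b : Fin k → ℝ,
      ENNReal.ofReal (Real.exp (s / √k * (b l ^ 2 - 1))) ∂(gaussVec k 1) ≤
        ENNReal.ofReal (Real.exp (4 * (s / √k) ^ 2)) :=
    ((measurePreserving_eval (fun _ : Fin k => gaussianReal 0 1) l).lintegral_comp
      (f := fun x => ENNReal.ofReal (Real.exp (s / √k * (x ^ 2 - 1)))) (by fun_prop)).trans_le
        (lintegral_exp_mul_sq_sub_one_gaussianReal_le hsk)
  simp only [hprod]
  rw [lintegral_prod_eq_prod_lintegral_of_indepFun _ _ hindep fun _ => by fun_prop]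
  refine (Finset.prod_le_prod' fun l _ => hfactor l).trans_eq ?_
  rw [Finset.prod_const, Finset.card_univ, Fintype.card_fin,
    ← ENNReal.ofReal_pow (Real.exp_pos _).le, ← Real.exp_nat_mul, div_pow,
    Real.sq_sqrt (Nat.cast_nonneg k)]
  field_simp

lemma lintegral_exp_abs_normSqDev_le :
    ∫⁻ b : Fin k → ℝ, ENNReal.ofReal (Real.exp (|normSqDev b| / 4)) ∂(gaussVec k 1) ≤
      ENNReal.ofReal 3 := by
  have hmgf (s : ℝ) (hs : |s| = 1 / 4) : ∫⁻ b : Fin k → ℝ,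
      ENNReal.ofReal (Real.exp (s * normSqDev b)) ∂(gaussVec k 1) ≤
        ENNReal.ofReal (Real.exp (1 / 4)) :=
    (lintegral_exp_mul_normSqDev_le hs.le).trans_eq (by rw [← sq_abs, hs]; norm_num)
  have hexp : Real.exp (1 / 4) ≤ 3 / 2 := by
    linarith [(abs_le.1 (Real.abs_exp_sub_one_sub_id_le (x := 1 / 4) (by norm_num))).2]
  calc ∫⁻ b : Fin k → ℝ, ENNReal.ofReal (Real.exp (|normSqDev b| / 4)) ∂(gaussVec k 1)
    _ ≤ ∫⁻ b : Fin k → ℝ, (ENNReal.ofReal (Real.exp (1 / 4 * normSqDev b)) +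
          ENNReal.ofReal (Real.exp (-(1 / 4) * normSqDev b))) ∂(gaussVec k 1) := by
        refine lintegral_mono fun b => ?_
        rw [← ENNReal.ofReal_add (Real.exp_pos _).le (Real.exp_pos _).le,
          show |normSqDev b| / 4 = |1 / 4 * normSqDev b| by rw [abs_mul]; norm_num; ring, neg_mul]
        exact ENNReal.ofReal_le_ofReal (Real.exp_abs_le _)
    _ ≤ ENNReal.ofReal (Real.exp (1 / 4)) + ENNReal.ofReal (Real.exp (1 / 4)) := by
        rw [lintegral_add_left (by fun_prop)]
        exact add_le_add (hmgf _ (by norm_num)) (hmgf _ (by norm_num))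
    _ ≤ ENNReal.ofReal 3 := by
        rw [← ENNReal.ofReal_add (Real.exp_pos _).le (Real.exp_pos _).le]
        exact ENNReal.ofReal_le_ofReal (by linarith)

lemma measure_le_abs_normSqDev_le (s : ℝ) :
    gaussVec k 1 {b | s ≤ |normSqDev b|} ≤ ENNReal.ofReal (3 * Real.exp (-(s / 4))) := by
  have hsub : {b : Fin k → ℝ | s ≤ |normSqDev b|} ⊆ {b | ENNReal.ofReal (Real.exp (s / 4)) ≤
      ENNReal.ofReal (Real.exp (|normSqDev b| / 4))} := by
    intro b hb
    refine ENNReal.ofReal_le_ofReal ?_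
    gcongr
    exact hb
  calc gaussVec k 1 {b | s ≤ |normSqDev b|}
    _ ≤ (∫⁻ b : Fin k → ℝ, ENNReal.ofReal (Real.exp (|normSqDev b| / 4)) ∂(gaussVec k 1)) /
          ENNReal.ofReal (Real.exp (s / 4)) :=
        (measure_mono hsub).trans (meas_ge_le_lintegral_div (by fun_prop)
          (ENNReal.ofReal_pos.2 (Real.exp_pos _)).ne' ENNReal.ofReal_ne_top)
    _ ≤ ENNReal.ofReal 3 / ENNReal.ofReal (Real.exp (s / 4)) := by
        gcongr
        exact lintegral_exp_abs_normSqDev_le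
    _ = ENNReal.ofReal (3 * Real.exp (-(s / 4))) := by
        rw [← ENNReal.ofReal_div_of_pos (Real.exp_pos _), Real.exp_neg, div_eq_mul_inv]

lemma measure_exists_le_abs_normSqDev_le (N : ℕ) (s : ℝ) :
    iidGaussVec N k 1 {B | ∃ i, s ≤ |normSqDev (B i)|} ≤
      ENNReal.ofReal (N * (3 * Real.exp (-(s / 4)))) := by
  have hcoord (i : Fin N) : iidGaussVec N k 1 {B | s ≤ |normSqDev (B i)|} ≤
      ENNReal.ofReal (3 * Real.exp (-(s / 4))) := by
    have hmeas : MeasurableSet {b : Fin k → ℝ | s ≤ |normSqDev b|} :=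
      measurableSet_le measurable_const (by fun_prop)
    exact ((measurePreserving_eval (fun _ : Fin N => gaussVec k 1) i).measure_preimage
      hmeas.nullMeasurableSet).trans_le (measure_le_abs_normSqDev_le s)
  calc iidGaussVec N k 1 {B | ∃ i, s ≤ |normSqDev (B i)|}
    _ ≤ ∑ i, iidGaussVec N k 1 {B | s ≤ |normSqDev (B i)|} := by
        rw [Set.ofPred_exists]
        exact measure_iUnion_fintype_le _ _
    _ ≤ ∑ _i : Fin N, ENNReal.ofReal (3 * Real.exp (-(s / 4))) :=
        Finset.sum_le_sum fun i _ => hcoord i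
    _ = ENNReal.ofReal (N * (3 * Real.exp (-(s / 4)))) := by
        rw [ENNReal.ofReal_mul (Nat.cast_nonneg N)]
        simp

/-- The vector `(‖b‖² - k) b`, centered for the standard Gaussian law on `ℝ^k`. -/
noncomputable def centeredCubic (b : Fin k → ℝ) : EuclideanSpace ℝ (Fin k) :=
  (∑ l, b l ^ 2 - k) • WithLp.toLp 2 b

/-- `centeredCubic`, set to zero where `‖b‖²` deviates from `k` by more than `s √k`; it is bounded
and still odd. -/
noncomputable def truncCenteredCubic (s : ℝ) : (Fin k → ℝ) → EuclideanSpace ℝ (Fin k) :=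
  {b | |normSqDev b| ≤ s}.indicator centeredCubic

@[fun_prop]
lemma measurable_truncCenteredCubic (s : ℝ) :
    Measurable (truncCenteredCubic s : (Fin k → ℝ) → EuclideanSpace ℝ (Fin k)) := by
  have hmeas : Measurable (centeredCubic : (Fin k → ℝ) → EuclideanSpace ℝ (Fin k)) := by
    unfold centeredCubic
    fun_prop
  exact hmeas.indicator (measurableSet_le (by fun_prop) measurable_const)

lemma truncCenteredCubic_neg (s : ℝ) (b : Fin k → ℝ) :
    truncCenteredCubic s (-b) = -truncCenteredCubic s b := by
  simp only [truncCenteredCubic, Set.indicator_apply, normSqDev, centeredCubic, Set.mem_ofPred_eq,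
    Pi.neg_apply, neg_sq, WithLp.toLp_neg, smul_neg]
  split_ifs <;> simp

lemma norm_centeredCubic_sq_le (b : Fin k → ℝ) :
    ‖centeredCubic b‖ ^ 2 ≤ k ^ 2 * (|normSqDev b| ^ 2 * (1 + |normSqDev b|)) := by
  have hk : √(k : ℝ) ^ 2 = k := Real.sq_sqrt (Nat.cast_nonneg k)
  have hsqrt : √(k : ℝ) ≤ k :=
    Real.sqrt_le_iff.2 ⟨Nat.cast_nonneg k, by exact_mod_cast Nat.le_self_pow two_ne_zero k⟩
  have hnorm : ‖centeredCubic b‖ ^ 2 = k * |normSqDev b| ^ 2 * (k + √k * normSqDev b) := by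
    rw [centeredCubic, norm_smul, mul_pow, EuclideanSpace.real_norm_sq_eq, Real.norm_eq_abs,
      sq_abs, sq_abs, sum_sq_eq_add_normSqDev]
    linear_combination normSqDev b ^ 2 * (k + √k * normSqDev b) * hk
  calc ‖centeredCubic b‖ ^ 2 = k * |normSqDev b| ^ 2 * (k + √k * normSqDev b) := hnorm
    _ ≤ k * |normSqDev b| ^ 2 * (k + √k * |normSqDev b|) := by
        gcongr
        exact le_abs_self _
    _ ≤ k * |normSqDev b| ^ 2 * (k + k * |normSqDev b|) := by gcongr
    _ = k ^ 2 * (|normSqDev b| ^ 2 * (1 + |normSqDev b|)) := by ring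

lemma norm_truncCenteredCubic_le {s : ℝ} (hs : 1 ≤ s) (b : Fin k → ℝ) :
    ‖truncCenteredCubic s b‖ ≤ 2 * k * s ^ (3 / 2 : ℝ) := by
  by_cases hb : |normSqDev b| ≤ s
  · have hpow : (s ^ (3 / 2 : ℝ)) ^ 2 = s ^ 3 := by
      rw [← Real.rpow_mul_natCast (by positivity), ← Real.rpow_natCast s 3]
      norm_num
    rw [truncCenteredCubic, Set.indicator_apply, if_pos (by exact hb)]
    refine (sq_le_sq₀ (norm_nonneg _) (by positivity)).1 ?_
    calc ‖centeredCubic b‖ ^ 2 ≤ k ^ 2 * (|normSqDev b| ^ 2 * (1 + |normSqDev b|)) :=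
          norm_centeredCubic_sq_le b
      _ ≤ k ^ 2 * (s ^ 2 * (3 * s + s)) := by
          gcongr
          linarith
      _ = (2 * k * s ^ (3 / 2 : ℝ)) ^ 2 := by
          rw [mul_pow, hpow]
          ring
  · rw [truncCenteredCubic, Set.indicator_apply, if_neg (by exact hb), norm_zero]
    positivity

lemma sq_mul_one_add_le_exp {x : ℝ} (hx : 0 ≤ x) :
    x ^ 2 * (1 + x) ≤ 416 * Real.exp (x / 4) := by
  have hterm (n : ℕ) : (x / 4) ^ n / n.factorial ≤ Real.exp (x / 4) :=
    Real.pow_div_factorial_le_exp (x / 4) (by positivity) n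
  calc x ^ 2 * (1 + x)
    _ = 32 * ((x / 4) ^ 2 / Nat.factorial 2) + 384 * ((x / 4) ^ 3 / Nat.factorial 3) := by
        simp only [Nat.factorial]
        ring
    _ ≤ 32 * Real.exp (x / 4) + 384 * Real.exp (x / 4) := by
        gcongr
        · exact hterm 2
        · exact hterm 3
    _ = 416 * Real.exp (x / 4) := by ring

lemma lintegral_norm_truncCenteredCubic_sq_le (s : ℝ) :
    ∫⁻ b : Fin k → ℝ, ENNReal.ofReal (‖truncCenteredCubic s b‖ ^ 2) ∂(gaussVec k 1) ≤
      ENNReal.ofReal ((36 * k) ^ 2) := by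
  have hpointwise (b : Fin k → ℝ) : ENNReal.ofReal (‖truncCenteredCubic s b‖ ^ 2) ≤
      ENNReal.ofReal (k ^ 2 * 416) * ENNReal.ofReal (Real.exp (|normSqDev b| / 4)) := by
    rw [← ENNReal.ofReal_mul (by positivity)]
    refine ENNReal.ofReal_le_ofReal ?_
    calc ‖truncCenteredCubic s b‖ ^ 2 ≤ ‖centeredCubic b‖ ^ 2 := by
          gcongr
          exact norm_indicator_le_norm_self _ _
      _ ≤ k ^ 2 * (|normSqDev b| ^ 2 * (1 + |normSqDev b|)) := norm_centeredCubic_sq_le b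
      _ ≤ k ^ 2 * (416 * Real.exp (|normSqDev b| / 4)) :=
          mul_le_mul_of_nonneg_left (sq_mul_one_add_le_exp (abs_nonneg _)) (sq_nonneg _)
      _ = k ^ 2 * 416 * Real.exp (|normSqDev b| / 4) := by ring
  calc ∫⁻ b : Fin k → ℝ, ENNReal.ofReal (‖truncCenteredCubic s b‖ ^ 2) ∂(gaussVec k 1)
    _ ≤ ENNReal.ofReal (k ^ 2 * 416) *
          ∫⁻ b : Fin k → ℝ, ENNReal.ofReal (Real.exp (|normSqDev b| / 4)) ∂(gaussVec k 1) := by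
        rw [← lintegral_const_mul' _ _ ENNReal.ofReal_ne_top]
        exact lintegral_mono hpointwise
    _ ≤ ENNReal.ofReal (k ^ 2 * 416) * ENNReal.ofReal 3 := by
        gcongr
        exact lintegral_exp_abs_normSqDev_le
    _ ≤ ENNReal.ofReal ((36 * k) ^ 2) := by
        rw [← ENNReal.ofReal_mul (by positivity)]
        exact ENNReal.ofReal_le_ofReal (by nlinarith [sq_nonneg (k : ℝ)])

end Gaussian

section VectorNorms

variable {k : ℕ}

lemma eucNorm_eq_norm_toLp (v : Fin k → ℝ) : eucNorm v = ‖WithLp.toLp 2 v‖ := by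
  simp [eucNorm, EuclideanSpace.norm_eq]

lemma eucNorm_nonneg (v : Fin k → ℝ) : 0 ≤ eucNorm v := Real.sqrt_nonneg _

lemma abs_le_supNorm (v : Fin k → ℝ) (i : Fin k) : |v i| ≤ supNorm v :=
  le_ciSup (Set.finite_range fun i => |v i|).bddAbove i

lemma supNorm_nonneg (v : Fin k → ℝ) : 0 ≤ supNorm v :=
  Real.iSup_nonneg fun i => abs_nonneg (v i)

lemma sqrt_sum_mul_sq {c : ℝ} (hc : 0 ≤ c) (v : Fin k → ℝ) :
    √(∑ i, (c * v i) ^ 2) = c * eucNorm v := by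
  simp only [mul_pow, ← Finset.mul_sum, eucNorm]
  rw [Real.sqrt_mul (sq_nonneg c), Real.sqrt_sq hc]

end VectorNorms

section GaussianCubicSum

variable {N k : ℕ}

lemma norm_smul_truncCenteredCubic_le (v : Fin N → ℝ) {L : ℝ} (hL : 1 / 16 ≤ L) (i : Fin N)
    (b : Fin k → ℝ) :
    ‖v i • truncCenteredCubic (16 * L) b‖ ≤ supNorm v * (128 * k * L ^ (3 / 2 : ℝ)) := by
  have hpow : (16 * L) ^ (3 / 2 : ℝ) = 64 * L ^ (3 / 2 : ℝ) := by
    rw [Real.mul_rpow (by norm_num) (by linarith), show (16 : ℝ) = 4 ^ (2 : ℝ) by norm_num,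
      ← Real.rpow_mul (by norm_num)]
    norm_num
  have htrunc := norm_truncCenteredCubic_le (by linarith : 1 ≤ 16 * L) b
  rw [hpow] at htrunc
  rw [norm_smul, Real.norm_eq_abs]
  exact mul_le_mul (abs_le_supNorm v i) (htrunc.trans_eq (by ring)) (norm_nonneg _)
    (supNorm_nonneg v)

lemma lintegral_norm_smul_truncCenteredCubic_sq_le (a s : ℝ) (i : Fin N) :
    ∫⁻ B : Fin N → Fin k → ℝ, ENNReal.ofReal (‖a • truncCenteredCubic s (B i)‖ ^ 2)
      ∂(iidGaussVec N k 1) ≤ ENNReal.ofReal ((36 * k * a) ^ 2) := by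
  have hcoord := (measurePreserving_eval (fun _ : Fin N => gaussVec k 1) i).lintegral_comp
    (f := fun b => ENNReal.ofReal (‖truncCenteredCubic s b‖ ^ 2)) (by fun_prop)
  simp only [norm_smul, mul_pow _ _ 2, Real.norm_eq_abs, sq_abs, mul_comm (a ^ 2),
    ENNReal.ofReal_mul' (sq_nonneg a)]
  rw [lintegral_mul_const' _ _ ENNReal.ofReal_ne_top, ← mul_pow]
  gcongr
  exact hcoord.trans_le (lintegral_norm_truncCenteredCubic_sq_le s)

lemma measure_norm_sum_smul_truncCenteredCubic_gt_le (v : Fin N → ℝ) {L : ℝ} (hL : 1 / 16 ≤ L) :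
    iidGaussVec N k 1 {B | 384 * (k * (eucNorm v * √L + supNorm v * L ^ (5 / 2 : ℝ))) <
        ‖∑ i, v i • truncCenteredCubic (16 * L) (B i)‖} ≤
      ENNReal.ofReal (2 * Real.exp (-(2 * L))) := by
  have hL0 : 0 < L := by linarith
  set X : Fin N → (Fin N → Fin k → ℝ) → EuclideanSpace ℝ (Fin k) :=
    fun i B => v i • truncCenteredCubic (16 * L) (B i)
  have hX (i : Fin N) : Measurable (X i) := by fun_prop
  have hindep : iIndepFun X (iidGaussVec N k 1) :=
    iIndepFun_pi (X := fun i b => v i • truncCenteredCubic (16 * L) b) fun _ => by fun_prop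
  have hsymm (i : Fin N) :
      IdentDistrib (X i) (fun B => -X i B) (iidGaussVec N k 1) (iidGaussVec N k 1) :=
    identDistrib_neg_of_odd (measurePreserving_eval (fun _ => gaussVec k 1) i).hasLaw
      (f := fun b => v i • truncCenteredCubic (16 * L) b) (by fun_prop)
      fun b => by rw [truncCenteredCubic_neg, smul_neg]
  have hbernstein := measure_norm_sum_gt_le_bernstein hX hindep hsymm
    (mul_nonneg (supNorm_nonneg v) (by positivity))
    (fun i => .of_forall fun B => norm_smul_truncCenteredCubic_le v hL i (B i))
    (fun i => lintegral_norm_smul_truncCenteredCubic_sq_le (v i) (16 * L) i) hL0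
  refine (measure_mono fun B hB => ?_).trans hbernstein
  rw [Set.mem_ofPred_eq] at hB ⊢
  refine lt_of_le_of_lt ?_ hB
  have hpow : L ^ (5 / 2 : ℝ) = L ^ (3 / 2 : ℝ) * L := by
    rw [← Real.rpow_add_one hL0.ne']
    norm_num
  have hnonneg : 0 ≤ k * (eucNorm v * √L) := by
    have := eucNorm_nonneg v
    positivity
  rw [sqrt_sum_mul_sq (by positivity), hpow]
  linarith

lemma measure_norm_sum_smul_centeredCubic_gt_le (v : Fin N → ℝ) {L : ℝ} (hL : 1 / 16 ≤ L) :
    iidGaussVec N k 1 {B | 384 * (k * (eucNorm v * √L + supNorm v * L ^ (5 / 2 : ℝ))) <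
        ‖∑ i, v i • centeredCubic (B i)‖} ≤
      ENNReal.ofReal (N * (3 * Real.exp (-(4 * L))) + 2 * Real.exp (-(2 * L))) := by
  set r := 384 * (k * (eucNorm v * √L + supNorm v * L ^ (5 / 2 : ℝ)))
  have hsub : {B : Fin N → Fin k → ℝ | r < ‖∑ i, v i • centeredCubic (B i)‖} ⊆
      {B | ∃ i, 16 * L ≤ |normSqDev (B i)|} ∪
        {B | r < ‖∑ i, v i • truncCenteredCubic (16 * L) (B i)‖} := by
    intro B hB
    refine or_iff_not_imp_left.2 fun hsmall => ?_
    have htrunc (i : Fin N) : truncCenteredCubic (16 * L) (B i) = centeredCubic (B i) :=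
      Set.indicator_of_mem
        (show B i ∈ {b | |normSqDev b| ≤ 16 * L} from le_of_not_ge fun hi => hsmall ⟨i, hi⟩) _
    simpa only [Set.mem_ofPred_eq, htrunc] using hB
  have hdev := measure_exists_le_abs_normSqDev_le (k := k) N (16 * L)
  rw [show 16 * L / 4 = 4 * L by ring] at hdev
  rw [ENNReal.ofReal_add (by positivity) (by positivity)]
  exact (measure_mono hsub).trans ((measure_union_le _ _).trans
    (add_le_add hdev (measure_norm_sum_smul_truncCenteredCubic_gt_le v hL)))

lemma eucNorm_cubic_smul_eq (w : NNReal) (v : Fin N → ℝ) (Z : Fin N → Fin k → ℝ) :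
    eucNorm (fun j => ∑ i, ((∑ l, (√(w : ℝ) • Z) i l ^ 2) - k * w) * v i * (√(w : ℝ) • Z) i j) =
      w ^ (3 / 2 : ℝ) * ‖∑ i, v i • centeredCubic (Z i)‖ := by
  have hpow : (w : ℝ) ^ (3 / 2 : ℝ) = w * √w := by
    rw [Real.sqrt_eq_rpow, ← Real.rpow_one_add' w.coe_nonneg (by norm_num)]
    norm_num
  rw [eucNorm_eq_norm_toLp, ← Real.norm_of_nonneg (by positivity : 0 ≤ (w : ℝ) ^ (3 / 2 : ℝ)),
    ← norm_smul, hpow]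
  congr 1
  ext j
  simp only [centeredCubic, Pi.smul_apply, smul_eq_mul, mul_pow, Real.sq_sqrt w.coe_nonneg,
    ← Finset.mul_sum, PiLp.smul_apply, WithLp.ofLp_sum, Finset.sum_apply]
  rw [Finset.mul_sum]
  refine Finset.sum_congr rfl fun i _ => ?_
  ring

lemma mul_exp_neg_log_div_add_le {N δ : ℝ} (hN : 2 ≤ N) (hδ0 : 0 < δ) (hδ1 : δ < 1) :
    N * (3 * Real.exp (-(4 * Real.log (N / δ)))) + 2 * Real.exp (-(2 * Real.log (N / δ))) ≤ δ := by
  have hexp (m : ℕ) : Real.exp (-(m * Real.log (N / δ))) = (δ / N) ^ m := by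
    rw [← mul_neg, Real.exp_nat_mul, ← Real.log_inv, Real.exp_log (by positivity), inv_div]
  have hfour := hexp 4
  have htwo := hexp 2
  push_cast at hfour htwo
  rw [hfour, htwo]
  set q := δ / N
  have hq : q ≤ 1 / 2 := by
    rw [div_le_div_iff₀ (by positivity) two_pos]
    linarith
  have hq0 : 0 ≤ q := by positivity
  calc N * (3 * q ^ 4) + 2 * q ^ 2 = N * (3 * q * q ^ 3) + 2 * (q * q) := by ring
    _ ≤ N * (3 * q * (1 / 2) ^ 3) + 2 * (q * (1 / 2)) := by gcongr
    _ ≤ N * q := by nlinarith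
    _ = δ := mul_div_cancel₀ δ (by positivity)

lemma one_sub_le_measure_norm_sum_smul_centeredCubic_le (v : Fin N → ℝ) {δ : ℝ} (hN : 2 ≤ N)
    (hδ0 : 0 < δ) (hδ1 : δ < 1) :
    ENNReal.ofReal (1 - δ) ≤ iidGaussVec N k 1 {B | ‖∑ i, v i • centeredCubic (B i)‖ ≤
      384 * (k * (eucNorm v * √(Real.log (N / δ)) +
        supNorm v * Real.log (N / δ) ^ (5 / 2 : ℝ)))} := by
  have hN' : (2 : ℝ) ≤ N := by exact_mod_cast hN
  have hlog : Real.log 2 ≤ Real.log (N / δ) :=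
    Real.log_le_log two_pos (by rw [le_div_iff₀ hδ0]; nlinarith)
  have htail := (measure_norm_sum_smul_centeredCubic_gt_le (k := k) v
    (L := Real.log (N / δ)) (by linarith [Real.log_two_gt_d9])).trans
      (ENNReal.ofReal_le_ofReal (mul_exp_neg_log_div_add_le hN' hδ0 hδ1))
  rw [ENNReal.ofReal_sub _ hδ0.le, ENNReal.ofReal_one, tsub_le_iff_right,
    ← measure_univ (μ := iidGaussVec N k 1)]
  refine (measure_univ_le_add_compl _).trans (add_le_add_right ?_ _)
  simpa only [Set.compl_ofPred, not_le] using htail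

lemma one_sub_le_measure_eucNorm_cubic_le (w : NNReal) (v : Fin N → ℝ) {δ : ℝ}
    (hkN : k = 0 ∨ 2 ≤ N) (hδ0 : 0 < δ) (hδ1 : δ < 1) :
    ENNReal.ofReal (1 - δ) ≤ iidGaussVec N k w
      {B | eucNorm (fun j => ∑ i, ((∑ l, B i l ^ 2) - k * w) * v i * B i j) ≤
        384 * (k * w ^ (3 / 2 : ℝ) * (eucNorm v * √(Real.log (N / δ)) +
          supNorm v * Real.log (N / δ) ^ (5 / 2 : ℝ)))} := by
  rcases hkN with rfl | hN
  · simp [eucNorm, hδ0.le]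
  rw [← map_smul_iidGaussVec_one N k w]
  refine (one_sub_le_measure_norm_sum_smul_centeredCubic_le v hN hδ0 hδ1).trans
    ((measure_mono fun Z hZ => ?_).trans (Measure.le_map_apply (by fun_prop) _))
  rw [Set.mem_preimage, Set.mem_ofPred_eq, eucNorm_cubic_smul_eq]
  exact (mul_le_mul_of_nonneg_left hZ (by positivity)).trans_eq (by ring)

theorem stmt_3_general {n : ℕ} (w : NNReal) (v : Fin N → ℝ) {δ : ℝ} (hn : 1 ≤ n)
    (hnN : min n 2 ≤ N) (hδ0 : 0 < δ) (hδ1 : δ < 1) :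
    ENNReal.ofReal (1 - δ) ≤ iidGaussVec N (n - 1) w
      {B | eucNorm (fun j => ∑ i, ((∑ l, B i l ^ 2) - ((n : ℝ) - 1) * w) * v i * B i j) ≤
        384 * (eucNorm v * n * √(Real.log (N / δ)) * w ^ (3 / 2 : ℝ) +
          supNorm v * n * Real.log (N / δ) ^ (5 / 2 : ℝ) * w ^ (3 / 2 : ℝ))} := by
  obtain ⟨k, rfl⟩ := Nat.exists_eq_add_of_le' hn
  have hN : (1 : ℝ) ≤ N := by exact_mod_cast (by omega : 1 ≤ N)
  have hlog : 0 ≤ Real.log (N / δ) := Real.log_nonneg ((one_le_div hδ0).2 (by linarith))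
  have hV := eucNorm_nonneg v
  have hM := supNorm_nonneg v
  simp only [Nat.cast_add_one, add_sub_cancel_right]
  refine (one_sub_le_measure_eucNorm_cubic_le w v (by omega) hδ0 hδ1).trans
    (measure_mono fun B hB => ?_)
  simp only [Nat.add_sub_cancel, Set.mem_ofPred_eq] at hB
  calc _ ≤ _ := hB
    _ ≤ 384 * ((k + 1) * w ^ (3 / 2 : ℝ) * (eucNorm v * √(Real.log (N / δ)) +
          supNorm v * Real.log (N / δ) ^ (5 / 2 : ℝ))) := by
        gcongr
        linarith
    _ = _ := by ring

end GaussianCubicSum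

/-- with `b_1, …, b_N` i.i.d. `N(0, (1/N) I_{n-1})` and `v ∈ ℝ^N` fixed, there
is a universal constant `C > 0` such that for any `δ ∈ (0,1)`, with probability at least
`1 - δ`, `‖∑_i (‖b_i‖² - (n-1)/N) v_i b_i‖
  ≤ C (‖v‖ n √(log(N/δ))/N^{3/2} + ‖v‖_∞ n log^{5/2}(N/δ)/N^{3/2})`. -/
theorem stmt_3 :
    ∃ C : ℝ, 0 < C ∧
      ∀ (N n : ℕ) (v : Fin N → ℝ) (δ : ℝ), 1 ≤ n → n ≤ N → 0 < δ → δ < 1 →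
        ENNReal.ofReal (1 - δ) ≤
          (iidGaussVec N (n - 1) ((N : NNReal))⁻¹)
            {B | eucNorm
                (fun j => ∑ i, ((∑ l, (B i l) ^ 2) - ((n : ℝ) - 1) / N) * v i * B i j)
              ≤ C * (eucNorm v * n * Real.sqrt (Real.log (N / δ)) / (N : ℝ) ^ ((3 : ℝ) / 2)
                  + supNorm v * n * (Real.log (N / δ)) ^ ((5 : ℝ) / 2)
                      / (N : ℝ) ^ ((3 : ℝ) / 2))} := by
  refine ⟨384, by norm_num, fun N n v δ hn hnN hδ0 hδ1 => ?_⟩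
  simpa only [NNReal.coe_inv, NNReal.coe_natCast, Real.inv_rpow (Nat.cast_nonneg N),
    ← div_eq_mul_inv] using stmt_3_general (N : NNReal)⁻¹ v hn (min_le_of_left_le hnN) hδ0 hδ1
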